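/- Let R be a regular domain with a generalized regular system of parameters x = x_1,…,x_p. If I = (x^{a_1},…,x^{a_s}) is a monomial ideal in R with respect to x, then Γ_x(I) = NP(I), i.e., the Newton polyhedron of I as defined via supports coincides with the polyhedron {a ∈ ℝ_{≥0}^p : a ≥ Σ_{i=1}^s c_i a_i for some c_i ∈ ℝ_{≥0} with Σ c_i = 1}. -/

import Mathlib

open Ideal Set Pointwise

noncomputable section

namespace NND

variable {R : Type*} [CommRing R] {p : ℕ}

/-- The monomial `x^a = x 0 ^ a 0 * ⋯` in the elements `x`. -/
def mono (x : Fin p → R) (a : Fin p → ℕ) : R := ∏ i, x i ^ a i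

/-- A (commutative) ring is regular local if it is Noetherian local and its maximal ideal
can be generated by `dim R` elements. -/
def IsRegularLocal (A : Type*) [CommRing A] : Prop :=
  IsNoetherianRing A ∧ ∃ h : IsLocalRing A, ∃ s : Finset A,
    Ideal.span (s : Set A) = @IsLocalRing.maximalIdeal A _ h ∧
    (s.card : WithBot (WithTop ℕ)) = ringKrullDim A

/-- A regular domain: an integral domain whose localization at every prime is regular local. -/
def IsRegularDomain (A : Type*) [CommRing A] : Prop :=
  IsDomain A ∧ ∀ (P : Ideal A) (hP : P.IsPrime), IsRegularLocal (@Localization.AtPrime A _ P hP)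

/-- `x` is a regular sequence. -/
def IsRegSeq (x : Fin p → R) : Prop :=
  Ideal.span (Set.range x) ≠ ⊤ ∧
  ∀ i : Fin p, ∀ r : R, r * x i ∈ Ideal.span (x '' {j | j < i}) →
    r ∈ Ideal.span (x '' {j | j < i})

/-- A generalized regular system of parameters: a permutable regular sequence all of whose
subquotients are regular domains. -/
def IsGRSOP (x : Fin p → R) : Prop :=
  (∀ σ : Equiv.Perm (Fin p), IsRegSeq (x ∘ σ)) ∧
  ∀ S : Set (Fin p), IsRegularDomain (R ⧸ Ideal.span (x '' S))

/-- `A` is the exponent set of a monomial representation of `f`: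
`h * f = ∑_{a ∈ A} r a * x^a` with `h` and the `r a` outside `(x_1, …, x_p)`. -/
def IsMonRep (x : Fin p → R) (f : R) (A : Finset (Fin p → ℕ)) : Prop :=
  ∃ (h : R) (r : (Fin p → ℕ) → R),
    h ∉ Ideal.span (Set.range x) ∧ (∀ a ∈ A, r a ∉ Ideal.span (Set.range x)) ∧
    h * f = ∑ a ∈ A, r a * mono x a

/-- A minimal (irredundant) monomial representation: no monomial divides another. -/
def IsMinMonRep (x : Fin p → R) (f : R) (A : Finset (Fin p → ℕ)) : Prop :=
  IsMonRep x f A ∧ ∀ a ∈ A, ∀ b ∈ A, a ≠ b → ¬ mono x a ∣ mono x b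

open Classical in
/-- The support of `f`: the exponent set of its (unique) minimal monomial representation. -/
def supp (x : Fin p → R) (f : R) : Set (Fin p → ℕ) :=
  if h : ∃ A : Finset (Fin p → ℕ), IsMinMonRep x f A then ↑h.choose else ∅

/-- Embedding of exponent vectors into `ℝ^p`. -/
def toR (a : Fin p → ℕ) : Fin p → ℝ := fun i => (a i : ℝ)

/-- The Newton polyhedron of a set of ring elements. -/
def Γ (x : Fin p → R) (S : Set R) : Set (Fin p → ℝ) :=
  convexHull ℝ (toR '' ⋃ f ∈ S, supp x f)

/-- The Newton polyhedron `Γ_x(I)` of an ideal. -/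
def ΓI (x : Fin p → R) (I : Ideal R) : Set (Fin p → ℝ) := Γ x (I : Set R)

/-- The Newton polyhedron `Γ_x(f)` of an element: that of the principal ideal `(f)`. -/
def ΓE (x : Fin p → R) (f : R) : Set (Fin p → ℝ) := ΓI x (Ideal.span {f})

/-- The integral closure of an ideal `I`: elements satisfying an equation of integral
dependence `f^n + a_1 f^{n-1} + ⋯ + a_n = 0` with `a_i ∈ I^i`. -/
def intClosure (I : Ideal R) : Set R :=
  {f | ∃ n : ℕ, 0 < n ∧ ∃ a : ℕ → R, (∀ i ∈ Finset.Icc 1 n, a i ∈ I ^ i) ∧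
    f ^ n + ∑ i ∈ Finset.Icc 1 n, a i * f ^ (n - i) = 0}

/-- The monomial ideal `I_0` spanned by the lattice points of `Γ_x(I)`. -/
def idealZero (x : Fin p → R) (I : Ideal R) : Ideal R :=
  Ideal.span (mono x '' {a | toR a ∈ ΓI x I})

/-- The ideal `K_I` generated by the monomials lying in the integral closure of `I`. -/
def KIdeal (x : Fin p → R) (I : Ideal R) : Ideal R :=
  Ideal.span {m | (∃ a : Fin p → ℕ, m = mono x a) ∧ m ∈ intClosure I}

/-!
For a regular sequence `x`, a relation `r * x^a ∈ (x^b : b ∈ B)` with `r ∉ (x)` forces `b ≤ a` for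
some `b ∈ B`. This goes by induction on the length of `x`: modulo an ideal spanned by the monomials
outside a finite lower set, `R` is an iterated extension of copies of `R ⧸ (x)`, so a further
element that is regular modulo `(x)` is regular there too and can be cancelled from the relation.

Applied to a minimal representation of `f ∈ (x^b : b ∈ B)`, this puts every exponent
of `f` above some `b ∈ B`; applied to a representation of the monomial `x^b`, it shows that
`b ∈ supp(x^b)`. Both hold for whichever minimal representation `supp` selects. Hence the exponents
occurring in the ideal form the upper closure `B + ℕ^p`, whose convex hull is
`conv(B) + ℝ_{≥0}^p` because convex hulls commute with Minkowski sums.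
-/

section Monomials

variable (x : Fin p → R)

lemma mono_zero : mono x 0 = 1 := by simp [mono]

lemma mono_add (a b : Fin p → ℕ) : mono x (a + b) = mono x a * mono x b := by
  simp [mono, pow_add, Finset.prod_mul_distrib]

lemma mono_single (i : Fin p) : mono x (Pi.single i 1) = x i := by
  simp [mono, Pi.single_apply]

lemma mono_eq_init_mul_last {n : ℕ} (x : Fin (n + 1) → R) (a : Fin (n + 1) → ℕ) :
    mono x a = mono (Fin.init x) (Fin.init a) * x (Fin.last n) ^ a (Fin.last n) :=
  Fin.prod_univ_castSucc _

variable {x}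

lemma mono_dvd_mono {a b : Fin p → ℕ} (h : a ≤ b) : mono x a ∣ mono x b :=
  Finset.prod_dvd_prod_of_dvd _ _ fun i _ => pow_dvd_pow _ (h i)

lemma mono_mem_span_mono {B : Set (Fin p → ℕ)} {b : Fin p → ℕ} (hb : b ∈ B) :
    mono x b ∈ span (mono x '' B) :=
  subset_span (mem_image_of_mem _ hb)

lemma mul_mono_mem_span_mono_of_mem_span_range {B : Set (Fin p → ℕ)} {a : Fin p → ℕ} {r : R}
    (hB : ∀ i, Pi.single i 1 + a ∈ B) (hr : r ∈ span (range x)) :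
    r * mono x a ∈ span (mono x '' B) := by
  suffices span (range x) ≤ (span (mono x '' B)).colon {mono x a} from
    Submodule.mem_colon_singleton.1 (this hr)
  rw [span_le, range_subset_iff]
  intro i
  have hi : x i • mono x a = mono x (Pi.single i 1 + a) := by
    rw [mono_add, mono_single, smul_eq_mul]
  exact Submodule.mem_colon_singleton.2 (hi ▸ mono_mem_span_mono (hB i))

lemma span_mono_compl_Iic_le {n : ℕ} (x : Fin (n + 1) → R) (a : Fin (n + 1) → ℕ) :
    span (mono x '' (Iic a)ᶜ) ≤ span {x (Fin.last n) ^ (a (Fin.last n) + 1)} ⊔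
      span (mono (Fin.init x) '' (Iic (Fin.init a))ᶜ) := by
  rw [span_le]
  rintro _ ⟨b, hb, rfl⟩
  rw [mono_eq_init_mul_last]
  by_cases hlast : b (Fin.last n) ≤ a (Fin.last n)
  · have hinit : Fin.init b ∈ (Iic (Fin.init a))ᶜ := fun h =>
      hb (Fin.forall_fin_succ'.2 ⟨h, hlast⟩)
    exact mem_sup_right (mul_mem_right _ _ (mono_mem_span_mono hinit))
  · exact mem_sup_left (mul_mem_left _ _ (mem_span_singleton.2 (pow_dvd_pow _ (by omega))))

end Monomials

/-- Monomials in `x` are independent modulo `(x)`: the coefficient of `x^a` in a relation with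
monomials that do not divide `x^a` lies in `(x)`. This is how the regularity of a sequence enters
the computation of supports. -/
def MonomialIndependent (x : Fin p → R) : Prop :=
  ∀ (a : Fin p → ℕ) (r : R), r * mono x a ∈ span (mono x '' (Iic a)ᶜ) → r ∈ span (range x)

namespace MonomialIndependent

variable {x : Fin p → R}

lemma exists_le (hx : MonomialIndependent x) {B : Set (Fin p → ℕ)} {a : Fin p → ℕ} {r : R}
    (hr : r ∉ span (range x)) (h : r * mono x a ∈ span (mono x '' B)) : ∃ b ∈ B, b ≤ a := by
  by_contra! hB
  exact hr (hx a r (span_mono (image_mono hB) h))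

lemma isSMulRegular_quotient_span_mono_compl (hx : MonomialIndependent x) {y : R}
    (hy : IsSMulRegular (R ⧸ span (range x)) y) {F : Set (Fin p → ℕ)}
    (hfin : F.Finite) (hF : IsLowerSet F) : IsSMulRegular (R ⧸ span (mono x '' Fᶜ)) y := by
  -- Induction on `F`: removing a maximal `a` from `F` changes the quotient by a copy of `R ⧸ (x)`,
  -- generated by `x^a`.
  lift F to Finset (Fin p → ℕ) using hfin
  induction F using Finset.strongInduction with
  | H F ih =>
  rw [isSMulRegular_quotient_iff_mem_of_smul_mem]
  intro f hf
  obtain rfl | hne := F.eq_empty_or_nonempty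
  · have h1 : (1 : R) ∈ span (mono x '' ((∅ : Finset (Fin p → ℕ)) : Set (Fin p → ℕ))ᶜ) :=
      mono_zero x ▸ mono_mem_span_mono (by simp)
    exact (eq_top_iff_one _).2 h1 ▸ Submodule.mem_top
  obtain ⟨a, ha⟩ := F.exists_maximal hne
  have hcompl : ((F.erase a : Finset (Fin p → ℕ)) : Set (Fin p → ℕ))ᶜ = insert a (↑F)ᶜ := by
    ext b; simp [imp_iff_not_or, or_comm]
  have hreg := ih _ (Finset.erase_ssubset ha.prop) (by
    rw [Finset.coe_erase]
    exact hF.erase fun b hb hab => (ha.eq_of_le hb hab).symm)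
  rw [hcompl, image_insert_eq] at hreg
  have hf' := mem_of_isSMulRegular_quotient_of_smul_mem hreg
    (span_mono (subset_insert _ _) hf)
  obtain ⟨g, m, hm, rfl⟩ := mem_span_insert.1 hf'
  have hyg : y • g ∈ span (range x) := by
    have hsub : (F : Set (Fin p → ℕ))ᶜ ⊆ (Iic a)ᶜ := compl_subset_compl.2 (hF.Iic_subset ha.prop)
    refine hx a _ (span_mono (image_mono hsub) ?_)
    have : y • g * mono x a = y • (g * mono x a + m) - y * m := by simp only [smul_eq_mul]; ring
    exact this ▸ sub_mem hf (mul_mem_left _ _ hm)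
  have hg : g ∈ span (range x) := mem_of_isSMulRegular_quotient_of_smul_mem hy hyg
  have hsucc (i : Fin p) : Pi.single i 1 + a ∈ (F : Set (Fin p → ℕ))ᶜ := fun hi => by
    have := congrFun (ha.eq_of_le hi le_add_self) i
    simp at this
  exact add_mem (mul_mono_mem_span_mono_of_mem_span_range hsucc hg) hm

lemma of_init {n : ℕ} {x : Fin (n + 1) → R} (hx : MonomialIndependent (Fin.init x))
    (hlast : IsSMulRegular (R ⧸ span (range (Fin.init x))) (x (Fin.last n))) :
    MonomialIndependent x := by
  intro a r hr
  set y := x (Fin.last n)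
  set m := mono (Fin.init x) (Fin.init a)
  set M := span (mono (Fin.init x) '' (Iic (Fin.init a))ᶜ)
  obtain ⟨t, q, hq, htq⟩ := mem_span_singleton_sup.1 (span_mono_compl_Iic_le x a hr)
  have hrel : r * m - t * y ∈ M := by
    have hreg := hx.isSMulRegular_quotient_span_mono_compl hlast (finite_Iic (Fin.init a))
      (isLowerSet_Iic _)
    refine mem_of_isSMulRegular_quotient_of_smul_mem (hreg.pow (a (Fin.last n))) ?_
    convert hq using 1
    rw [mono_eq_init_mul_last] at htq
    simp only [smul_eq_mul]
    linear_combination -htq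
  -- The last relation says `y * t ∈ M ⊔ (m)`, and `M ⊔ (m)` is again spanned by the monomials
  -- outside a finite lower set, so `y` can be cancelled once more.
  obtain ⟨u, q', hq', htu⟩ : ∃ u, ∃ q' ∈ M, t = u * m + q' := by
    have hreg := hx.isSMulRegular_quotient_span_mono_compl hlast (finite_Iio (Fin.init a))
      (isLowerSet_Iio _)
    have hcompl : (Iio (Fin.init a))ᶜ = insert (Fin.init a) (Iic (Fin.init a))ᶜ := by
      ext b; simp [lt_iff_le_and_ne, imp_iff_not_or, or_comm]
    rw [hcompl, image_insert_eq] at hreg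
    refine mem_span_insert.1 (mem_of_isSMulRegular_quotient_of_smul_mem hreg ?_)
    exact mem_span_insert.2 ⟨r, -(r * m - t * y), neg_mem hrel, by simp only [smul_eq_mul, m]; ring⟩
  have hru : r - u * y ∈ span (range (Fin.init x)) := by
    refine hx (Fin.init a) _ ?_
    have : (r - u * y) * m = r * m - t * y + y * q' := by linear_combination y * htu
    exact this ▸ add_mem hrel (mul_mem_left _ _ hq')
  have hinit : span (range (Fin.init x)) ≤ span (range x) :=
    span_mono (range_comp_subset_range Fin.castSucc x)
  have hy : y ∈ span (range x) := subset_span (mem_range_self _)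
  simpa using add_mem (hinit hru) (mul_mem_left _ u hy)

lemma of_isSMulRegular {x : Fin p → R}
    (hx : ∀ i, IsSMulRegular (R ⧸ span (x '' Iio i)) (x i)) : MonomialIndependent x := by
  induction p with
  | zero =>
    intro a r hr
    have : (Iic a)ᶜ = ∅ := by ext b; simp [Subsingleton.elim b a]
    simpa [mono, this] using hr
  | succ n ih =>
    refine of_init (ih fun i => ?_) ?_
    · have himage : Fin.init x '' Iio i = x '' Iio i.castSucc := by
        rw [← Fin.image_castSucc_Iio, ← image_comp]; rfl
      exact himage ▸ hx i.castSucc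
    · have hrange : range (Fin.init x) = x '' Iio (Fin.last n) := by
        rw [show Iio (Fin.last n) = range Fin.castSucc from Fin.range_castSucc.symm,
          ← range_comp]
        rfl
      exact hrange ▸ hx (Fin.last n)

end MonomialIndependent

lemma IsRegSeq.monomialIndependent {x : Fin p → R} (hx : IsRegSeq x) : MonomialIndependent x :=
  .of_isSMulRegular fun i => (isSMulRegular_quotient_iff_mem_of_smul_mem _ _).2 fun r hr =>
    hx.2 i r (by rwa [mul_comm])

section Support

variable {x : Fin p → R} {f : R} {A : Finset (Fin p → ℕ)} {a b : Fin p → ℕ}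

lemma exists_isMinMonRep_supp_eq (h : ∃ A, IsMinMonRep x f A) :
    ∃ A, IsMinMonRep x f A ∧ supp x f = A :=
  ⟨h.choose, h.choose_spec, dif_pos h⟩

lemma exists_isMinMonRep_of_mem_supp (ha : a ∈ supp x f) : ∃ A, IsMinMonRep x f A ∧ a ∈ A := by
  by_cases h : ∃ A, IsMinMonRep x f A
  · obtain ⟨A, hA, hsupp⟩ := exists_isMinMonRep_supp_eq h
    exact ⟨A, hA, by simpa [hsupp] using ha⟩
  · simp [supp, h] at ha

lemma isMinMonRep_mono (hx : span (range x) ≠ ⊤) (b : Fin p → ℕ) :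
    IsMinMonRep x (mono x b) {b} := by
  have h1 : (1 : R) ∉ span (range x) := (ne_top_iff_one _).1 hx
  refine ⟨⟨1, fun _ => 1, h1, fun _ _ => h1, by simp⟩, fun a ha c hc hac => ?_⟩
  exact absurd ((Finset.mem_singleton.1 ha).trans (Finset.mem_singleton.1 hc).symm) hac

lemma IsMinMonRep.exists_le (hA : IsMinMonRep x f A) (hx : MonomialIndependent x)
    {B : Set (Fin p → ℕ)} (hf : f ∈ span (mono x '' B)) (ha : a ∈ A) : ∃ b ∈ B, b ≤ a := by
  classical
  obtain ⟨⟨h, r, -, hr, hsum⟩, hmin⟩ := hA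
  have hmem : r a * mono x a ∈ span (mono x '' (B ∪ (A.erase a : Finset _))) := by
    rw [← Finset.add_sum_erase _ _ ha] at hsum
    rw [eq_sub_of_add_eq hsum.symm]
    exact sub_mem (mul_mem_left _ _ (span_mono (image_mono subset_union_left) hf))
      (sum_mem fun c hc => mul_mem_left _ _ (mono_mem_span_mono (Or.inr hc)))
  obtain ⟨b, hb | hb, hba⟩ := hx.exists_le (hr a ha) hmem
  · exact ⟨b, hb, hba⟩
  · obtain ⟨hne, hbA⟩ := Finset.mem_erase.1 hb
    exact absurd (mono_dvd_mono hba) (hmin b hbA a ha hne)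

lemma IsMonRep.exists_le_of_mono (hA : IsMonRep x (mono x b) A) (hx : MonomialIndependent x) :
    ∃ a ∈ A, a ≤ b := by
  obtain ⟨h, r, hh, -, hsum⟩ := hA
  refine hx.exists_le (B := (A : Set (Fin p → ℕ))) hh (hsum ▸ ?_)
  exact sum_mem fun a ha => mul_mem_left _ _ (mono_mem_span_mono ha)

lemma mem_supp_mono (hx : MonomialIndependent x) (hx' : span (range x) ≠ ⊤) (b : Fin p → ℕ) :
    b ∈ supp x (mono x b) := by
  obtain ⟨A, hA, hsupp⟩ := exists_isMinMonRep_supp_eq ⟨_, isMinMonRep_mono hx' b⟩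
  obtain ⟨a, ha, hab⟩ := hA.1.exists_le_of_mono hx
  obtain ⟨_, rfl, hba⟩ := hA.exists_le hx (mono_mem_span_mono (mem_singleton b)) ha
  rwa [hsupp, ← le_antisymm hab hba]

lemma iUnion_supp_span_mono (hx : MonomialIndependent x) (hx' : span (range x) ≠ ⊤)
    (B : Set (Fin p → ℕ)) : ⋃ f ∈ span (mono x '' B), supp x f = upperClosure B := by
  ext a
  simp only [mem_iUnion, exists_prop, SetLike.mem_coe, mem_upperClosure]
  constructor
  · rintro ⟨f, hf, ha⟩
    obtain ⟨A, hA, haA⟩ := exists_isMinMonRep_of_mem_supp ha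
    exact hA.exists_le hx hf haA
  · rintro ⟨b, hb, hba⟩
    exact ⟨mono x a, mem_of_dvd _ (mono_dvd_mono hba) (mono_mem_span_mono hb),
      mem_supp_mono hx hx' a⟩

end Support

section ConvexGeometry

lemma convexHull_range_natCast : convexHull ℝ (range ((↑) : ℕ → ℝ)) = Ici 0 := by
  refine subset_antisymm (convexHull_min ?_ (convex_Ici 0)) fun t ht => ?_
  · rintro _ ⟨n, rfl⟩
    exact mem_Ici.2 n.cast_nonneg
  · have hseg : t ∈ segment ℝ ((0 : ℕ) : ℝ) (⌈t⌉₊ : ℝ) := by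
      rw [segment_eq_Icc (by simp)]
      exact ⟨by simpa using ht, Nat.le_ceil t⟩
    exact segment_subset_convexHull (mem_range_self _) (mem_range_self _) hseg

lemma convexHull_range_toR : convexHull ℝ (range (toR : (Fin p → ℕ) → Fin p → ℝ)) = Ici 0 := by
  have hrange : range (toR : (Fin p → ℕ) → Fin p → ℝ) = univ.pi fun _ => range ((↑) : ℕ → ℝ) :=
    range_piMap _
  rw [hrange, convexHull_pi, convexHull_range_natCast]
  exact pi_univ_Ici 0

lemma image_toR_upperClosure (B : Set (Fin p → ℕ)) :
    toR '' (upperClosure B : Set (Fin p → ℕ)) = toR '' B + range toR := by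
  have htoR (a b : Fin p → ℕ) : toR a + toR b = toR (a + b) := by ext i; simp [toR]
  ext v
  simp [mem_add, htoR, le_iff_exists_add, eq_comm]

lemma convexHull_image_toR_upperClosure (B : Set (Fin p → ℕ)) :
    convexHull ℝ (toR '' (upperClosure B : Set (Fin p → ℕ))) =
      convexHull ℝ (toR '' B) + Ici 0 := by
  rw [image_toR_upperClosure, convexHull_add, convexHull_range_toR]

lemma convexHull_range_eq_image_stdSimplex {𝕜 ι E : Type*} [Field 𝕜] [LinearOrder 𝕜]
    [IsStrictOrderedRing 𝕜] [Fintype ι] [AddCommGroup E] [Module 𝕜 E] (w : ι → E) :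
    convexHull 𝕜 (range w) = Fintype.linearCombination 𝕜 w '' stdSimplex 𝕜 ι := by
  classical
  rw [← convexHull_rangle_single_eq_stdSimplex, LinearMap.image_convexHull, ← range_comp]
  congr 2
  ext i
  simp

lemma mem_convexHull_range_add_Ici {𝕜 ι E : Type*} [Field 𝕜] [LinearOrder 𝕜]
    [IsStrictOrderedRing 𝕜] [Fintype ι] [AddCommGroup E] [PartialOrder E] [IsOrderedAddMonoid E]
    [Module 𝕜 E] {w : ι → E} {v : E} :
    v ∈ convexHull 𝕜 (range w) + Ici 0 ↔ ∃ c ∈ stdSimplex 𝕜 ι, ∑ i, c i • w i ≤ v := by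
  rw [convexHull_range_eq_image_stdSimplex, mem_add, exists_mem_image]
  simp only [Fintype.linearCombination_apply, mem_Ici]
  refine exists_congr fun c => and_congr_right fun _ => ?_
  rw [le_iff_exists_nonneg_add]

lemma convexHull_image_toR_range_add_Ici {ι : Type*} [Fintype ι] (a : ι → Fin p → ℕ) :
    convexHull ℝ (toR '' range a) + Ici 0 = {v : Fin p → ℝ | (∀ j, 0 ≤ v j) ∧
      ∃ c : ι → ℝ, (∀ i, 0 ≤ c i) ∧ (∑ i, c i) = 1 ∧ ∀ j, (∑ i, c i * (a i j : ℝ)) ≤ v j} := by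
  ext v
  rw [← range_comp, mem_convexHull_range_add_Ici]
  simp only [stdSimplex, mem_ofPred_eq, Pi.le_def, Finset.sum_apply, Pi.smul_apply,
    Function.comp_apply, toR, smul_eq_mul, and_assoc]
  refine ⟨fun ⟨c, hc, hc1, hcv⟩ => ⟨fun j => ?_, c, hc, hc1, hcv⟩, And.right⟩
  exact (Finset.sum_nonneg fun i _ => mul_nonneg (hc i) (a i j).cast_nonneg).trans (hcv j)

end ConvexGeometry

theorem newtonPolyhedron_monomial_ideal_general {R : Type*} [CommRing R] {p : ℕ}
    {x : Fin p → R} (hx : IsRegSeq x) (B : Set (Fin p → ℕ)) :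
    ΓI x (span (mono x '' B)) = convexHull ℝ (toR '' B) + Ici 0 := by
  rw [← convexHull_image_toR_upperClosure, ← iUnion_supp_span_mono hx.monomialIndependent hx.1]
  rfl

/-- for monomial ideals, `Γ_x(I) = NP(I)`. -/
theorem newtonPolyhedron_monomial_ideal {R : Type*} [CommRing R] {p : ℕ}
    (x : Fin p → R) (hR : IsRegularDomain R) (hx : IsGRSOP x)
    (s : ℕ) (a : Fin s → Fin p → ℕ) (I : Ideal R)
    (hI : I = Ideal.span (Set.range fun i => mono x (a i))) :
    ΓI x I = {v : Fin p → ℝ | (∀ j, 0 ≤ v j) ∧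
      ∃ c : Fin s → ℝ, (∀ i, 0 ≤ c i) ∧ (∑ i, c i) = 1 ∧
        ∀ j, (∑ i, c i * (a i j : ℝ)) ≤ v j} := by
  rw [hI, range_comp' (mono x) a, newtonPolyhedron_monomial_ideal_general (x := x) (hx.1 1),
    convexHull_image_toR_range_add_Ici]

end NND
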